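/- Let ℋ be an algebra with finite-order automorphism ι and let Σ̃ be an irreducible finite-dimensional representation of the crossed product ℋ ⋊ ⟨ι⟩. Then the restriction of Σ̃ to ℋ is irreducible if and only if the trace tr(Σ̃(ι × f)) is not identically zero as f ranges over ℋ. -/

import Mathlib

/-!
If `ρ` is irreducible, then `ρ(ℋ) = End V` by Burnside, so `A ∘ ρ(f)` can be any endomorphism, in
particular one of nonzero trace.

Conversely, the sum of the simple `ℋ`-submodules is `A`-stable, so `V` is semisimple over `ℋ`. Let
`C = End_ℋ V` and let `T` be conjugation by `A` on `C`. The functional `φ d = tr (A ∘ ρ(f) ∘ d)`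
satisfies `φ (x * T y) = φ (y * x)`, and `φ 1 ≠ 0`. If `T ≠ 1`, then `T` has an eigenvector
`d = T e - e` in the range of `T - 1`; it is invertible because `ker d` is `A`-stable, and then the
identity for `φ` forces first `T d = d` and next `φ 1 = φ (d⁻¹ (T e - e)) = 0`. So `A` commutes
with `C`, hence with every `ℋ`-equivariant projection, and every `ℋ`-submodule is `A`-stable.
-/

section TwistedTrace

variable {k C : Type*} [CommRing k] [Ring C] [Algebra k C]

/-- A linear functional `φ` on an algebra is a trace twisted by the endomorphism `T`; an ordinary
trace functional is the case `T = id`. -/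
def IsTwistedTrace (T : C →ₐ[k] C) (φ : C →ₗ[k] k) : Prop :=
  ∀ x y, φ (x * T y) = φ (y * x)

namespace IsTwistedTrace

variable {T : C →ₐ[k] C} {φ : C →ₗ[k] k}

theorem eigenvalue_eq_one [IsDomain k] (hφ : IsTwistedTrace T φ) (hφ1 : φ 1 ≠ 0) (d : Cˣ) {μ : k}
    (hd : T d = μ • (d : C)) : μ = 1 := by
  have h : μ * φ 1 = φ 1 := by simpa [hd] using hφ (↑d⁻¹ : C) d
  exact (mul_eq_right₀ hφ1).1 h

theorem apply_one_eq_zero (hφ : IsTwistedTrace T φ) (d : Cˣ) {e : C} (hd : T d = d)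
    (hde : T e - e = d) : φ 1 = 0 := by
  have hinv : T (↑d⁻¹ : C) = ↑d⁻¹ := d.eq_inv_of_mul_eq_one_left <| by
    simpa [hd] using (map_mul T (d : C) ↑d⁻¹).symm
  calc φ 1 = φ (↑d⁻¹ * T e) - φ (↑d⁻¹ * e) := by rw [← map_sub, ← mul_sub, hde, d.inv_mul]
    _ = φ (e * T ↑d⁻¹) - φ (↑d⁻¹ * e) := by rw [hφ, hinv]
    _ = 0 := by rw [hφ, sub_self]

theorem eq_id {k C : Type*} [Field k] [IsAlgClosed k] [Ring C] [Algebra k C]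
    [FiniteDimensional k C] {T : C →ₐ[k] C} {φ : C →ₗ[k] k} (hφ : IsTwistedTrace T φ)
    (hφ1 : φ 1 ≠ 0) (hunit : ∀ (d : C) (μ : k), d ≠ 0 → T d = μ • d → IsUnit d) :
    T = AlgHom.id k C := by
  let D : Submodule k C := LinearMap.range (T.toLinearMap - 1)
  have hTD : ∀ d ∈ D, T.toLinearMap d ∈ D := by
    rintro _ ⟨e, rfl⟩
    exact ⟨T e, by simp⟩
  suffices hbot : D = ⊥ by
    ext e
    simpa [sub_eq_zero] using LinearMap.congr_fun (LinearMap.range_eq_bot.1 hbot) e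
  by_contra hne
  have : Nontrivial D := Submodule.nontrivial_iff_ne_bot.2 hne
  obtain ⟨μ, hμ⟩ := Module.End.exists_eigenvalue (T.toLinearMap.restrict hTD)
  obtain ⟨⟨d, e, hed⟩, hd⟩ := hμ.exists_hasEigenvector
  have hTd : T d = μ • d := congrArg Subtype.val hd.apply_eq_smul
  obtain ⟨u, rfl⟩ := hunit d μ (fun h => hd.2 (Subtype.ext h)) hTd
  have hμ1 : μ = 1 := hφ.eigenvalue_eq_one hφ1 u hTd
  exact hφ1 (hφ.apply_one_eq_zero u (by rw [hTd, hμ1, one_smul]) hed)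

end IsTwistedTrace

end TwistedTrace

section Submodules

variable {R M : Type*} [Ring R] [AddCommGroup M] [Module R M]

theorem isSemisimpleModule_of_semilinear_irreducible [IsAtomic (Submodule R M)]
    {σ σ' : R →+* R} [RingHomInvPair σ σ'] [RingHomInvPair σ' σ] (A : M ≃ₛₗ[σ] M)
    (hirr : ∀ W : Submodule R M, (∀ x ∈ W, A x ∈ W) → W = ⊥ ∨ W = ⊤) :
    IsSemisimpleModule R M := by
  let socle : Submodule R M := sSup {W | IsSimpleModule R W}
  have hA : Submodule.orderIsoMapComap A socle ≤ socle := by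
    rw [OrderIso.map_sSup]
    refine iSup₂_le fun W hW => le_sSup ?_
    exact isSimpleModule_iff_isAtom.2
      ((OrderIso.isAtom_iff _ W).2 (isSimpleModule_iff_isAtom.1 hW))
  refine .of_sSup_simples_eq_top ?_
  refine (hirr socle fun x hx => hA (Submodule.mem_map_of_mem hx)).elim (fun hbot => ?_) id
  obtain htop | ⟨W, hW, -⟩ := eq_bot_or_exists_atom_le (⊤ : Submodule R M)
  · exact hbot.trans htop.symm
  · have hWsocle : W ≤ socle := le_sSup (isSimpleModule_iff_isAtom.2 hW)
    exact absurd (le_bot_iff.1 (hWsocle.trans_eq hbot)) hW.1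

theorem apply_mem_of_forall_end_commute [IsSemisimpleModule R M] {A : M → M}
    (hA : ∀ (d : Module.End R M) x, A (d x) = d (A x)) (W : Submodule R M) {x : M} (hx : x ∈ W) :
    A x ∈ W := by
  obtain ⟨U, hU⟩ := exists_isCompl W
  have hpx : W.projection U hU x = x := Submodule.projection_apply_of_mem_left hU hx
  rw [← hpx, hA]
  exact Submodule.projection_apply_mem hU (A x)

theorem isSimpleModule_iff_forall_invariant {S : Type*} [Semiring S] [SMul S R] [Module S M]
    [IsScalarTower S R M] [Nontrivial M] :
    IsSimpleModule R M ↔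
      ∀ W : Submodule S M, (∀ r : R, ∀ x ∈ W, r • x ∈ W) → W = ⊥ ∨ W = ⊤ := by
  constructor
  · intro _ W hW
    let W' : Submodule R M := { W with smul_mem' := hW }
    have hW' : W'.restrictScalars S = W := rfl
    simpa [← hW'] using eq_bot_or_eq_top W'
  · intro h
    refine { eq_bot_or_eq_top := fun W => ?_ }
    simpa using h (W.restrictScalars S) fun r x hx => W.smul_mem r hx

end Submodules

theorem exists_trace_ne_zero (k V : Type*) [Field k] [AddCommGroup V] [Module k V]
    [FiniteDimensional k V] [Nontrivial V] : ∃ g : Module.End k V, LinearMap.trace k V g ≠ 0 := by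
  obtain ⟨v, hv⟩ := exists_ne (0 : V)
  obtain ⟨ξ, hξ⟩ := Module.Projective.exists_dual_ne_zero k hv
  exact ⟨ξ.smulRight v, by rwa [LinearMap.trace_smulRight]⟩

section Commutant

variable {k H V : Type*} [CommRing k] [Ring H] [Algebra k H] [AddCommGroup V] [Module k V]
  [Module H V] [IsScalarTower k H V]
  {σ σ' : H →+* H} [RingHomInvPair σ σ'] [RingHomInvPair σ' σ]

/-- A `k`-linear automorphism `A` of an `H`-module with `A (f • x) = σ f • A x`, regarded as a
`σ`-semilinear automorphism over `H`. -/
def semilinearEquivOfLinearEquiv (A : V ≃ₗ[k] V) (hA : ∀ (f : H) x, A (f • x) = σ f • A x) :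
    V ≃ₛₗ[σ] V :=
  { A with map_smul' := hA }

/-- Conjugation by `A` on the commutant `End_H V`, where `A` is a `k`-linear automorphism of `V`
that is `σ`-semilinear over `H`. -/
def endConj (A : V ≃ₗ[k] V) (hA : ∀ (f : H) x, A (f • x) = σ f • A x) :
    Module.End H V ≃ₐ[k] Module.End H V :=
  .ofRingEquiv (f := (semilinearEquivOfLinearEquiv A hA).conjRingEquiv) fun c => by
    ext x
    change A (c • A.symm x) = c • x
    simp

variable (A : V ≃ₗ[k] V) (hA : ∀ (f : H) x, A (f • x) = σ f • A x)

theorem endConj_apply_apply (d : Module.End H V) (x : V) : endConj A hA d (A x) = A (d x) :=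
  congrArg (A ∘ d) (A.symm_apply_apply x)

/-- The functional `d ↦ tr (A f d)` on the commutant `End_H V`. -/
noncomputable def commutantTrace (f : H) : Module.End H V →ₗ[k] k :=
  LinearMap.trace k V ∘ₗ LinearMap.mulLeft k (A.toLinearMap ∘ₗ Algebra.lsmul k k V f) ∘ₗ
    LinearMap.restrictScalarsₗ k H V V k

theorem commutantTrace_isTwistedTrace (f : H) :
    IsTwistedTrace (endConj A hA).toAlgHom (commutantTrace A f) := by
  intro x y
  let a : Module.End k V := Algebra.lsmul k k V f
  let x' : Module.End k V := x.restrictScalars k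
  let y' : Module.End k V := y.restrictScalars k
  have hconj : (endConj A hA y).restrictScalars k * A.toLinearMap = A.toLinearMap * y' :=
    LinearMap.ext (endConj_apply_apply A hA y)
  have hcomm : y' * a = a * y' := LinearMap.ext fun v => map_smul y f v
  calc LinearMap.trace k V (A.toLinearMap * a * (x' * (endConj A hA y).restrictScalars k))
      = LinearMap.trace k V ((endConj A hA y).restrictScalars k * A.toLinearMap * a * x') := by
        rw [← mul_assoc, LinearMap.trace_mul_comm]
        simp only [mul_assoc]
    _ = LinearMap.trace k V (A.toLinearMap * (y' * a) * x') := by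
        rw [hconj, mul_assoc A.toLinearMap]
    _ = LinearMap.trace k V (A.toLinearMap * a * (y' * x')) := by
        rw [hcomm]
        simp only [mul_assoc]

end Commutant

section Representation

variable {k H V : Type*} [Field k] [Ring H] [Algebra k H] [AddCommGroup V] [Module k V]
  [FiniteDimensional k V] [Module H V] [IsScalarTower k H V]

theorem isUnit_of_endConj_eq_smul {σ σ' : H →+* H} [RingHomInvPair σ σ'] [RingHomInvPair σ' σ]
    (A : V ≃ₗ[k] V) (hA : ∀ (f : H) x, A (f • x) = σ f • A x)
    (hirr : ∀ W : Submodule H V, (∀ x ∈ W, A x ∈ W) → W = ⊥ ∨ W = ⊤)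
    {d : Module.End H V} {μ : k} (hd : d ≠ 0) (hμ : endConj A hA d = μ • d) : IsUnit d := by
  have hμ0 : μ ≠ 0 := by
    rintro rfl
    exact hd (by simpa using hμ)
  have hstable : ∀ x ∈ LinearMap.ker d, A x ∈ LinearMap.ker d := fun x hx => by
    have h : μ • d (A x) = 0 := by
      rw [← LinearMap.smul_apply, ← hμ, endConj_apply_apply, LinearMap.mem_ker.1 hx, map_zero]
    exact (smul_eq_zero.1 h).resolve_left hμ0
  have hinj : Function.Injective d := LinearMap.ker_eq_bot.1 <|
    (hirr _ hstable).resolve_right fun h => hd (LinearMap.ker_eq_top.1 h)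
  exact (Module.End.isUnit_iff d).2
    ⟨hinj, LinearMap.surjective_of_injective (f := d.restrictScalars k) hinj⟩

theorem isSimpleModule_of_trace_ne_zero [IsAlgClosed k] {ι : H ≃+* H} {A : V ≃ₗ[k] V}
    (hA : ∀ (f : H) x, A (f • x) = ι f • A x)
    (hirr : ∀ W : Submodule H V, (∀ x ∈ W, A x ∈ W) → W = ⊥ ∨ W = ⊤) {f : H}
    (hf : LinearMap.trace k V (A.toLinearMap ∘ₗ Algebra.lsmul k k V f) ≠ 0) :
    IsSimpleModule H V := by
  have := RingHomInvPair.of_ringEquiv ι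
  have := RingHomInvPair.of_ringEquiv_symm ι
  replace hA : ∀ (f : H) x, A (f • x) = (ι : H →+* H) f • A x := hA
  have : Nontrivial V := not_subsingleton_iff_nontrivial.1 fun _ => hf <| by
    rw [Subsingleton.elim (A.toLinearMap ∘ₗ _) 0, map_zero]
  have : IsArtinian H V := isArtinian_of_tower k inferInstance
  have : IsSemisimpleModule H V :=
    isSemisimpleModule_of_semilinear_irreducible (semilinearEquivOfLinearEquiv A hA) hirr
  have hid : (endConj A hA).toAlgHom = AlgHom.id k (Module.End H V) :=
    (commutantTrace_isTwistedTrace A hA f).eq_id hf fun d μ hd hμ =>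
      isUnit_of_endConj_eq_smul A hA hirr hd hμ
  have hcomm (d : Module.End H V) (x : V) : A (d x) = d (A x) := by
    rw [← endConj_apply_apply A hA]
    exact LinearMap.congr_fun (AlgHom.congr_fun hid d) (A x)
  exact { eq_bot_or_eq_top := fun W => hirr W fun _ => apply_mem_of_forall_end_commute hcomm W }

theorem lsmul_surjective_of_isSimpleModule [IsAlgClosed k] [IsSimpleModule H V] :
    Function.Surjective (Algebra.lsmul k k V : H →ₐ[k] Module.End k V) := by
  intro g
  have hschur := (IsSimpleModule.algebraMap_end_bijective_of_isAlgClosed (A := H) (V := V) k).2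
  let g' : Module.End (Module.End H V) V :=
    { g with
      map_smul' := fun c x => by
        obtain ⟨t, rfl⟩ := hschur c
        simp }
  have : Module.Finite (Module.End H V) V := .of_restrictScalars_finite k _ _
  obtain ⟨f, hf⟩ := Module.Finite.toModuleEnd_moduleEnd_surjective (R := H) (M := V) g'
  exact ⟨f, LinearMap.ext fun x => LinearMap.congr_fun hf x⟩

theorem exists_trace_ne_zero_of_isSimpleModule [IsAlgClosed k] [IsSimpleModule H V]
    (A : V ≃ₗ[k] V) :
    ∃ f : H, LinearMap.trace k V (A.toLinearMap ∘ₗ Algebra.lsmul k k V f) ≠ 0 := by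
  have := IsSimpleModule.nontrivial H V
  obtain ⟨g, hg⟩ := exists_trace_ne_zero k V
  obtain ⟨f, hf⟩ := lsmul_surjective_of_isSimpleModule (H := H) (A.symm.toLinearMap ∘ₗ g)
  refine ⟨f, ?_⟩
  rwa [hf, ← LinearMap.comp_assoc, LinearEquiv.comp_symm, LinearMap.id_comp]

end Representation

theorem crossed_restriction_irreducible_iff_twisted_trace_nonzero_general
    {k : Type*} [Field k] [IsAlgClosed k]
    {H : Type*} [Ring H] [Algebra k H]
    {V : Type*} [AddCommGroup V] [Module k V] [FiniteDimensional k V] [Nontrivial V]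
    (ι : H ≃+* H) (ρ : H →ₐ[k] Module.End k V) (A : V ≃ₗ[k] V)
    (hconj : ∀ f x, A (ρ f x) = ρ (ι f) (A x))
    (hirr : ∀ W : Submodule k V,
      (∀ f, ∀ x ∈ W, ρ f x ∈ W) → (∀ x ∈ W, A x ∈ W) → W = ⊥ ∨ W = ⊤) :
    (∀ W : Submodule k V, (∀ f, ∀ x ∈ W, ρ f x ∈ W) → W = ⊥ ∨ W = ⊤) ↔
      ∃ f : H, LinearMap.trace k V (A.toLinearMap ∘ₗ ρ f) ≠ 0 := by
  let _ : Module H V := Module.compHom V ρ.toRingHom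
  have : IsScalarTower k H V := ⟨fun c f x => by
    change ρ (c • f) x = c • ρ f x
    rw [map_smul, LinearMap.smul_apply]⟩
  have hirrH (W : Submodule H V) (hW : ∀ x ∈ W, A x ∈ W) : W = ⊥ ∨ W = ⊤ := by
    simpa using hirr (W.restrictScalars k) (fun f x hx => W.smul_mem f hx) hW
  refine (isSimpleModule_iff_forall_invariant (R := H)).symm.trans ⟨?_, ?_⟩
  · intro _
    exact exists_trace_ne_zero_of_isSimpleModule A
  · rintro ⟨f, hf⟩
    exact isSimpleModule_of_trace_ne_zero hconj hirrH hf

/-- Let `ℋ` be an algebra with a finite-order automorphism `ι`, and let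
`Σ̃` be an irreducible finite-dimensional representation of the crossed product
`ℋ ⋊ ⟨ι⟩`, given by the pair `(ρ, A)` where `ρ` is the restriction of `Σ̃` to `ℋ`
and `A = Σ̃(ι)` satisfies `A^l = 1` and `A ρ(f) A⁻¹ = ρ(f^ι)`.  Then the restriction
`ρ` of `Σ̃` to `ℋ` is irreducible if and only if the twisted trace
`f ↦ tr(Σ̃(ι × f)) = tr(A ∘ ρ(f))` is not identically zero on `ℋ`.
(Representations over an algebraically closed field of characteristic 0.) -/
theorem crossed_restriction_irreducible_iff_twisted_trace_nonzero
    {k : Type*} [Field k] [IsAlgClosed k] [CharZero k]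
    {H : Type*} [Ring H] [Algebra k H]
    {V : Type*} [AddCommGroup V] [Module k V] [FiniteDimensional k V] [Nontrivial V]
    (ι : H ≃ₐ[k] H) (l : ℕ) (hl : 0 < l) (hord : ι ^ l = 1)
    (ρ : H →ₐ[k] Module.End k V) (A : V ≃ₗ[k] V)
    (hA : A ^ l = 1)
    (hconj : ∀ f x, A (ρ f x) = ρ (ι f) (A x))
    (hirr : ∀ W : Submodule k V,
      (∀ f, ∀ x ∈ W, ρ f x ∈ W) → (∀ x ∈ W, A x ∈ W) → W = ⊥ ∨ W = ⊤) :
    (∀ W : Submodule k V, (∀ f, ∀ x ∈ W, ρ f x ∈ W) → W = ⊥ ∨ W = ⊤) ↔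
      ∃ f : H, LinearMap.trace k V (A.toLinearMap ∘ₗ ρ f) ≠ 0 := by
  exact crossed_restriction_irreducible_iff_twisted_trace_nonzero_general
    (ι : H ≃+* H) ρ A hconj hirr
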